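/- Let n ≥ 2 be even, Γ = Γ_{A_n}, R = ℂ[u,v]^Γ. (I) For every anti-Poisson involution θ of R with θ(x)=y, θ(y)=x, θ(z)=z: the ideal J_θ equals the ideal of R generated by x−y, the quotient R/J_θ is a reduced ring, and there is a ℂ-algebra isomorphism R/J_θ ≅ ℂ[X,Z]/(X²−Z^{n+1}) sending the class of x to X and the class of z to Z. (II) For every anti-Poisson involution θ of R with θ(x)=−x, θ(y)=y, θ(z)=−z: J_θ = (x,z), R/J_θ is reduced, and R/J_θ is ℂ-algebra isomorphic to the polynomial ring ℂ[Y] in one variable, sending the class of y to Y. -/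

import Mathlib

/-!
The invariant ring `R` is generated by `x = u^N`, `y = v^N`, `z = uv`, where `N = n + 1`
(`subalgebra_eq_top`): invariance under `diag(ε, ε⁻¹)` with `ε` a primitive `N`-th root of unity
forces every monomial `u^a v^b` occurring in an invariant polynomial to satisfy `a ≡ b mod N`.
Consequently `J_θ` is generated by `θ g - g` for `g ∈ {x, y, z}` (`Jideal_le`), which gives both
formulas for `J_θ`.

Both quotients are identified by mapping a polynomial ring onto `R/J_θ`, by `X ↦ [x], Z ↦ [z]` in case (I)
and `Y ↦ [y]` in case (II); surjectivity again holds because `x, y, z` generate `R`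
(`surjective_of_generators`). To find the kernel, compose with a map from `R/J_θ` to the
polynomial ring `ℂ[t]`, induced by a parametrisation of the fixed locus:

* in case (I), `u, v ↦ t` kills `x - y`, and the composite `X ↦ t^N, Z ↦ t^2` has kernel exactly
  `(X² - Z^N)` (`mem_span_cusp`), because `N` is odd and so `a(t²) + b(t²) t^N = 0` forces
  `a = b = 0`;
* in case (II), `u ↦ 0, v ↦ t` kills `x` and `z`, and the composite `Y ↦ t^N` is injective.

Since `R/J_θ` then embeds into the domain `ℂ[t]`, respectively is isomorphic to `ℂ[Y]`, it is
reduced.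
-/

open MvPolynomial Complex Matrix

noncomputable section

abbrev P2 : Type := MvPolynomial (Fin 2) ℂ

/-- The standard Poisson bracket on `ℂ[u,v]`, where `u = X 0`, `v = X 1`. -/
def pb (f g : P2) : P2 :=
  pderiv 0 f * pderiv 1 g - pderiv 1 f * pderiv 0 g

/-- The algebra endomorphism of `ℂ[u,v]` given by the linear substitution
`X i ↦ ∑ j, m i j • X j`. -/
def matSub (m : Matrix (Fin 2) (Fin 2) ℂ) : P2 →ₐ[ℂ] P2 :=
  aeval fun i => ∑ j, MvPolynomial.C (m i j) * X j

abbrev SL2 : Type := Matrix.SpecialLinearGroup (Fin 2) ℂ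

/-- The action of `g ∈ SL₂(ℂ)` on polynomials: `(g · f)(w) = f (g⁻¹ w)`. -/
def slAct (g : SL2) : P2 →ₐ[ℂ] P2 := matSub (↑(g⁻¹))

/-- The invariant ring `ℂ[u,v]^Γ` as a subalgebra of `ℂ[u,v]`. -/
def invRing (Γ : Subgroup SL2) : Subalgebra ℂ P2 :=
  ⨅ g : Γ, AlgHom.equalizer (slAct (g : SL2)) (AlgHom.id ℂ P2)

/-- `θ` is a graded algebra automorphism: it preserves homogeneous elements of each degree. -/
def IsGradedAut (Γ : Subgroup SL2) (θ : invRing Γ ≃ₐ[ℂ] invRing Γ) : Prop :=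
  ∀ (d : ℕ) (f : invRing Γ), (f : P2).IsHomogeneous d → ((θ f : invRing Γ) : P2).IsHomogeneous d

/-- `θ` is an anti-Poisson involution: a graded algebra automorphism with `θ ∘ θ = id`
and `θ {f, g} = -{θ f, θ g}` (the bracket condition is stated on underlying polynomials,
for every element `h` of the invariant ring whose underlying polynomial is `{f, g}`). -/
def IsAntiPoissonInv (Γ : Subgroup SL2) (θ : invRing Γ ≃ₐ[ℂ] invRing Γ) : Prop :=
  IsGradedAut Γ θ ∧ (∀ f, θ (θ f) = f) ∧
    ∀ f g h : invRing Γ, (h : P2) = pb (f : P2) (g : P2) →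
      ((θ h : invRing Γ) : P2) = - pb ((θ f : invRing Γ) : P2) ((θ g : invRing Γ) : P2)

/-- `σ` is a graded Poisson automorphism. -/
def IsGradedPoissonAut (Γ : Subgroup SL2) (σ : invRing Γ ≃ₐ[ℂ] invRing Γ) : Prop :=
  IsGradedAut Γ σ ∧
    ∀ f g h : invRing Γ, (h : P2) = pb (f : P2) (g : P2) →
      ((σ h : invRing Γ) : P2) = pb ((σ f : invRing Γ) : P2) ((σ g : invRing Γ) : P2)

/-- `θ'` is conjugate to `θ` by a graded Poisson automorphism: `θ' = σ ∘ θ ∘ σ⁻¹`. -/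
def APIConj (Γ : Subgroup SL2) (θ θ' : invRing Γ ≃ₐ[ℂ] invRing Γ) : Prop :=
  ∃ σ : invRing Γ ≃ₐ[ℂ] invRing Γ, IsGradedPoissonAut Γ σ ∧ ∀ f, θ' f = σ (θ (σ.symm f))

/-- `θ` takes the values `x' y' z'` on `x y z`. -/
def Vals (Γ : Subgroup SL2) (θ : invRing Γ ≃ₐ[ℂ] invRing Γ)
    (x y z x' y' z' : invRing Γ) : Prop :=
  θ x = x' ∧ θ y = y' ∧ θ z = z'

/-- The ideal `J_θ` generated by all `θ f - f`. -/
def Jideal (Γ : Subgroup SL2) (θ : invRing Γ ≃ₐ[ℂ] invRing Γ) : Ideal (invRing Γ) :=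
  Ideal.span (Set.range fun f => θ f - f)

lemma coeff_aeval_scale (c : Fin 2 → ℂ) (f : P2) (m : Fin 2 →₀ ℕ) :
    coeff m (aeval (fun i => MvPolynomial.C (c i) * (X i : P2)) f) =
      c 0 ^ m 0 * c 1 ^ m 1 * coeff m f := by
  induction f using MvPolynomial.induction_on' with
  | monomial s a =>
    have h : aeval (fun i => MvPolynomial.C (c i) * (X i : P2)) (monomial s a) =
        monomial s (c 0 ^ s 0 * c 1 ^ s 1 * a) := by
      rw [aeval_monomial, Finsupp.prod_fintype _ _ (by simp), monomial_eq (s := s),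
        Finsupp.prod_fintype _ _ (by simp)]
      simp only [Fin.prod_univ_two, mul_pow, map_mul, map_pow, algebraMap_eq]
      ring
    rw [h, coeff_monomial, coeff_monomial]
    split_ifs with hs
    · rw [hs]
    · simp
  | add p q hp hq => rw [map_add, coeff_add, coeff_add, hp, hq]; ring

/-- Every exponent occurring in a `Γ_{A_n}`-invariant polynomial satisfies `a ≡ b mod (n + 1)`. -/
lemma modEq_of_coeff_ne_zero {n : ℕ} {Γ : Subgroup SL2}
    (hΓ : ∀ g : SL2, g ∈ Γ ↔ ∃ ε : ℂ, ε ^ (n + 1) = 1 ∧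
      (g : Matrix (Fin 2) (Fin 2) ℂ) = !![ε, 0; 0, ε⁻¹])
    {f : P2} (hf : f ∈ invRing Γ) {m : Fin 2 →₀ ℕ} (hm : coeff m f ≠ 0) :
    m 0 ≡ m 1 [MOD (n + 1)] := by
  obtain ⟨ε, hε⟩ : ∃ ε : ℂ, IsPrimitiveRoot ε (n + 1) :=
    ⟨_, Complex.isPrimitiveRoot_exp (n + 1) (Nat.succ_ne_zero n)⟩
  have hε0 : ε ≠ 0 := hε.ne_zero (Nat.succ_ne_zero n)
  let g : SL2 := ⟨!![ε, 0; 0, ε⁻¹], by simp [Matrix.det_fin_two_of, hε0]⟩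
  have hg : g ∈ Γ := (hΓ g).2 ⟨ε, hε.pow_eq_one, rfl⟩
  have hinv : slAct g f = f := by
    have := (Algebra.mem_iInf.1 hf) ⟨g, hg⟩
    simpa using this
  have hact : slAct g = aeval (fun i => MvPolynomial.C (![ε⁻¹, ε] i) * (X i : P2)) := by
    have hginv : (↑(g⁻¹) : Matrix (Fin 2) (Fin 2) ℂ) = !![ε⁻¹, 0; 0, ε] := by
      rw [Matrix.SpecialLinearGroup.coe_inv, Matrix.adjugate_fin_two]
      simp [g]
    apply MvPolynomial.algHom_ext
    intro i
    fin_cases i <;> simp [slAct, matSub, hginv]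
  have h := coeff_aeval_scale ![ε⁻¹, ε] f m
  rw [← hact, hinv] at h
  have h1 : (ε⁻¹) ^ m 0 * ε ^ m 1 = 1 := by
    have : (ε⁻¹ ^ m 0 * ε ^ m 1 - 1) * coeff m f = 0 := by
      simp only [Matrix.cons_val_zero, Matrix.cons_val_one] at h
      linear_combination -h
    exact sub_eq_zero.1 ((mul_eq_zero.1 this).resolve_right hm)
  have h2 : ε ^ m 0 = ε ^ m 1 := by
    rw [inv_pow] at h1
    field_simp at h1
    exact h1.symm
  have h3 : Units.mk0 ε hε0 ^ m 0 = Units.mk0 ε hε0 ^ m 1 := Units.ext (by simpa using h2)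
  rwa [pow_eq_pow_iff_modEq, ← orderOf_units, Units.val_mk0, ← hε.eq_orderOf] at h3

/-- The invariants `u^(n+1)`, `v^(n+1)`, `uv` generate the invariant ring. -/
lemma subalgebra_eq_top {n : ℕ} {Γ : Subgroup SL2}
    (hΓ : ∀ g : SL2, g ∈ Γ ↔ ∃ ε : ℂ, ε ^ (n + 1) = 1 ∧
      (g : Matrix (Fin 2) (Fin 2) ℂ) = !![ε, 0; 0, ε⁻¹])
    {x y z : invRing Γ} (hx : (x : P2) = X 0 ^ (n + 1)) (hy : (y : P2) = X 1 ^ (n + 1))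
    (hz : (z : P2) = X 0 * X 1) (A : Subalgebra ℂ (invRing Γ))
    (hxA : x ∈ A) (hyA : y ∈ A) (hzA : z ∈ A) (f : invRing Γ) : f ∈ A := by
  let B : Subalgebra ℂ P2 := A.map (invRing Γ).val
  have hxB : (X 0 : P2) ^ (n + 1) ∈ B := ⟨x, hxA, hx⟩
  have hyB : (X 1 : P2) ^ (n + 1) ∈ B := ⟨y, hyA, hy⟩
  have hzB : (X 0 * X 1 : P2) ∈ B := ⟨z, hzA, hz⟩
  suffices hfB : (f : P2) ∈ B by
    obtain ⟨f', hf', h⟩ := hfB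
    rwa [← Subtype.ext (show (f' : P2) = f from h)]
  rw [(f : P2).as_sum]
  refine sum_mem fun m hm => ?_
  have hmod := modEq_of_coeff_ne_zero hΓ f.2 (mem_support_iff.1 hm)
  rw [monomial_eq, Finsupp.prod_fintype _ _ (by simp), Fin.prod_univ_two]
  refine mul_mem (B.algebraMap_mem _) ?_
  -- If `a ≤ b`, then `u^a v^b = (uv)^a (v^(n+1))^k` where `b - a = (n+1) k`, and symmetrically.
  rcases le_total (m 0) (m 1) with hle | hle
  · obtain ⟨k, hk⟩ := (Nat.modEq_iff_dvd' hle).1 hmod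
    have : (X 0 : P2) ^ m 0 * X 1 ^ m 1 = (X 0 * X 1) ^ m 0 * (X 1 ^ (n + 1)) ^ k := by
      rw [show m 1 = m 0 + (n + 1) * k by lia]; ring
    rw [this]
    exact mul_mem (pow_mem hzB _) (pow_mem hyB _)
  · obtain ⟨k, hk⟩ := (Nat.modEq_iff_dvd' hle).1 hmod.symm
    have : (X 0 : P2) ^ m 0 * X 1 ^ m 1 = (X 0 * X 1) ^ m 1 * (X 0 ^ (n + 1)) ^ k := by
      rw [show m 0 = m 1 + (n + 1) * k by lia]; ring
    rw [this]
    exact mul_mem (pow_mem hzB _) (pow_mem hxB _)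

/-- To bound `J_θ` it suffices to look at `θ g - g` for the generators `g = x, y, z`: the elements
`f` with `θ f ≡ f mod I` form a subalgebra. -/
lemma Jideal_le {n : ℕ} {Γ : Subgroup SL2}
    (hΓ : ∀ g : SL2, g ∈ Γ ↔ ∃ ε : ℂ, ε ^ (n + 1) = 1 ∧
      (g : Matrix (Fin 2) (Fin 2) ℂ) = !![ε, 0; 0, ε⁻¹])
    {x y z : invRing Γ} (hx : (x : P2) = X 0 ^ (n + 1)) (hy : (y : P2) = X 1 ^ (n + 1))
    (hz : (z : P2) = X 0 * X 1) (θ : invRing Γ ≃ₐ[ℂ] invRing Γ) (I : Ideal (invRing Γ))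
    (hxI : θ x - x ∈ I) (hyI : θ y - y ∈ I) (hzI : θ z - z ∈ I) : Jideal Γ θ ≤ I := by
  refine Ideal.span_le.2 ?_
  rintro _ ⟨f, rfl⟩
  have := subalgebra_eq_top hΓ hx hy hz
    (AlgHom.equalizer ((Ideal.Quotient.mkₐ ℂ I).comp (θ : invRing Γ →ₐ[ℂ] invRing Γ))
      (Ideal.Quotient.mkₐ ℂ I))
    (Ideal.Quotient.eq.2 hxI) (Ideal.Quotient.eq.2 hyI) (Ideal.Quotient.eq.2 hzI) f
  exact Ideal.Quotient.eq.1 this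

/-- An algebra map to a quotient of the invariant ring is surjective as soon as it hits the classes
of the generators `x, y, z`. -/
lemma surjective_of_generators {n : ℕ} {Γ : Subgroup SL2}
    (hΓ : ∀ g : SL2, g ∈ Γ ↔ ∃ ε : ℂ, ε ^ (n + 1) = 1 ∧
      (g : Matrix (Fin 2) (Fin 2) ℂ) = !![ε, 0; 0, ε⁻¹])
    {x y z : invRing Γ} (hx : (x : P2) = X 0 ^ (n + 1)) (hy : (y : P2) = X 1 ^ (n + 1))
    (hz : (z : P2) = X 0 * X 1) (J : Ideal (invRing Γ)) {S : Type} [CommRing S] [Algebra ℂ S]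
    (φ : S →ₐ[ℂ] invRing Γ ⧸ J) (hxφ : Ideal.Quotient.mk J x ∈ φ.range)
    (hyφ : Ideal.Quotient.mk J y ∈ φ.range) (hzφ : Ideal.Quotient.mk J z ∈ φ.range) :
    Function.Surjective φ := by
  intro q
  obtain ⟨f, rfl⟩ := Ideal.Quotient.mk_surjective q
  exact subalgebra_eq_top hΓ hx hy hz (φ.range.comap (Ideal.Quotient.mkₐ ℂ J)) hxφ hyφ hzφ f

/-- The ideal of the cusp `X² = Z^N` contains the kernel of its parametrisation
`X ↦ t^N`, `Z ↦ t^2`, for `N` odd. -/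
lemma mem_span_cusp {N : ℕ} (hN : Odd N) (p : P2)
    (hp : aeval ![(Polynomial.X : Polynomial ℂ) ^ N, Polynomial.X ^ 2] p = 0) :
    p ∈ Ideal.span {(X 0 : P2) ^ 2 - (X 1 : P2) ^ N} := by
  set I := Ideal.span {(X 0 : P2) ^ 2 - (X 1 : P2) ^ N} with hI
  -- Modulo `X² - Z^N`, every polynomial has the form `a(Z) + b(Z) X`.
  have normal_form : ∀ p : P2, ∃ a b : Polynomial ℂ,
      p - (Polynomial.aeval (X 1 : P2) a + Polynomial.aeval (X 1 : P2) b * X 0) ∈ I := by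
    intro p
    induction p using MvPolynomial.induction_on with
    | C c => exact ⟨Polynomial.C c, 0, by simp [algebraMap_eq]⟩
    | add p q hp hq =>
      obtain ⟨a, b, h⟩ := hp
      obtain ⟨a', b', h'⟩ := hq
      refine ⟨a + a', b + b', ?_⟩
      convert I.add_mem h h' using 1
      simp only [map_add]; ring
    | mul_X p i hp =>
      obtain ⟨a, b, h⟩ := hp
      fin_cases i
      · refine ⟨b * Polynomial.X ^ N, a, ?_⟩
        have h2 : (X 0 : P2) ^ 2 - (X 1 : P2) ^ N ∈ I := Ideal.mem_span_singleton_self _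
        convert I.add_mem (I.mul_mem_right (X 0) h)
          (I.mul_mem_left (Polynomial.aeval (X 1 : P2) b) h2) using 1
        simp only [map_mul, map_pow, Polynomial.aeval_X, Fin.zero_eta]; ring
      · refine ⟨a * Polynomial.X, b * Polynomial.X, ?_⟩
        convert I.mul_mem_right (X 1) h using 1
        simp only [map_mul, Polynomial.aeval_X, Fin.mk_one]; ring
  have hIker : ∀ q ∈ I, aeval ![(Polynomial.X : Polynomial ℂ) ^ N, Polynomial.X ^ 2] q = 0 := by
    have : I ≤ RingHom.ker
        (aeval (R := ℂ) ![(Polynomial.X : Polynomial ℂ) ^ N, Polynomial.X ^ 2]) := by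
      rw [hI, Ideal.span_singleton_le_iff_mem, RingHom.mem_ker]
      simp only [map_sub, map_pow, aeval_X, Matrix.cons_val_zero, Matrix.cons_val_one]; ring
    exact fun q hq => this hq
  obtain ⟨a, b, h⟩ := normal_form p
  have hsub : ∀ c : Polynomial ℂ,
      aeval ![(Polynomial.X : Polynomial ℂ) ^ N, Polynomial.X ^ 2]
        (Polynomial.aeval (X 1 : P2) c) = Polynomial.expand ℂ 2 c := by
    intro c
    rw [← Polynomial.aeval_algHom_apply]
    simp [Polynomial.expand_eq_comp_X_pow, Polynomial.aeval_def, Polynomial.comp,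
      Polynomial.algebraMap_eq]
  have h0 : Polynomial.expand ℂ 2 a + Polynomial.expand ℂ 2 b * Polynomial.X ^ N = 0 := by
    have := hIker _ h
    rw [map_sub, map_add, map_mul, hsub, hsub, hp, aeval_X, Matrix.cons_val_zero] at this
    linear_combination -this
  -- Even-degree coefficients see only `a`, because `N` is odd.
  have ha : a = 0 := by
    ext k
    have hk := congrArg (fun q => Polynomial.coeff q (k * 2)) h0
    simp only [Polynomial.coeff_add, Polynomial.coeff_expand_mul (by norm_num : 0 < 2),
      Polynomial.coeff_mul_X_pow', Polynomial.coeff_expand (by norm_num : 0 < 2),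
      Polynomial.coeff_zero] at hk
    obtain ⟨r, hr⟩ := hN
    split_ifs at hk with h1 h2
    · lia
    · simpa using hk
    · simpa using hk
  have hb : b = 0 := by
    rw [ha, map_zero, zero_add] at h0
    have := (mul_eq_zero.1 h0).resolve_right (pow_ne_zero _ Polynomial.X_ne_zero)
    exact (Polynomial.expand_eq_zero (by norm_num)).1 this
  simpa [ha, hb] using h

/-- fixed point loci of the anti-Poisson involutions in type `Aₙ`, `n` even. -/
theorem stmt8 (n : ℕ) (hn : 2 ≤ n) (heven : Even n) (Γ : Subgroup SL2)
    (hΓ : ∀ g : SL2, g ∈ Γ ↔ ∃ ε : ℂ, ε ^ (n + 1) = 1 ∧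
      (g : Matrix (Fin 2) (Fin 2) ℂ) = !![ε, 0; 0, ε⁻¹])
    (hx : (X 0 : P2) ^ (n + 1) ∈ invRing Γ)
    (hy : (X 1 : P2) ^ (n + 1) ∈ invRing Γ)
    (hz : (X 0 * X 1 : P2) ∈ invRing Γ) :
    let x : invRing Γ := ⟨(X 0 : P2) ^ (n + 1), hx⟩
    let y : invRing Γ := ⟨(X 1 : P2) ^ (n + 1), hy⟩
    let z : invRing Γ := ⟨(X 0 * X 1 : P2), hz⟩
    -- (I) θ(x) = y, θ(y) = x, θ(z) = z
    (∀ θ : invRing Γ ≃ₐ[ℂ] invRing Γ, IsAntiPoissonInv Γ θ → Vals Γ θ x y z y x z →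
      Jideal Γ θ = Ideal.span {x - y} ∧
      IsReduced ((invRing Γ) ⧸ Jideal Γ θ) ∧
      ∃ e : ((invRing Γ) ⧸ Jideal Γ θ) ≃ₐ[ℂ]
          (P2 ⧸ Ideal.span {(X 0 : P2) ^ 2 - (X 1 : P2) ^ (n + 1)}),
        e (Ideal.Quotient.mk (Jideal Γ θ) x) =
          Ideal.Quotient.mk (Ideal.span {(X 0 : P2) ^ 2 - (X 1 : P2) ^ (n + 1)}) (X 0) ∧
        e (Ideal.Quotient.mk (Jideal Γ θ) z) =
          Ideal.Quotient.mk (Ideal.span {(X 0 : P2) ^ 2 - (X 1 : P2) ^ (n + 1)}) (X 1)) ∧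
    -- (II) θ(x) = -x, θ(y) = y, θ(z) = -z
    (∀ θ : invRing Γ ≃ₐ[ℂ] invRing Γ, IsAntiPoissonInv Γ θ → Vals Γ θ x y z (-x) y (-z) →
      Jideal Γ θ = Ideal.span {x, z} ∧
      IsReduced ((invRing Γ) ⧸ Jideal Γ θ) ∧
      ∃ e : ((invRing Γ) ⧸ Jideal Γ θ) ≃ₐ[ℂ] Polynomial ℂ,
        e (Ideal.Quotient.mk (Jideal Γ θ) y) = Polynomial.X) := by
  intro x y z
  have hxy : x * y = z ^ (n + 1) := Subtype.ext (mul_pow (X 0 : P2) (X 1) (n + 1)).symm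
  constructor
  · rintro θ - ⟨hθx, hθy, hθz⟩
    have hJ : Jideal Γ θ = Ideal.span {x - y} := by
      apply le_antisymm
      · have hmem : x - y ∈ Ideal.span {x - y} := Ideal.mem_span_singleton_self _
        apply Jideal_le hΓ (x := x) (y := y) (z := z) rfl rfl rfl
        · rw [hθx, ← neg_sub x y]; exact neg_mem hmem
        · rw [hθy]; exact hmem
        · rw [hθz, sub_self]; exact zero_mem _
      · rw [Ideal.span_singleton_le_iff_mem]
        exact Ideal.subset_span ⟨y, by simp only [hθy]⟩
    refine ⟨hJ, ?_⟩
    generalize Jideal Γ θ = J at hJ ⊢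
    set I := Ideal.span {(X 0 : P2) ^ 2 - (X 1 : P2) ^ (n + 1)} with hI
    have hmkxy : Ideal.Quotient.mk J x = Ideal.Quotient.mk J y :=
      Ideal.Quotient.eq.2 (hJ ▸ Ideal.mem_span_singleton_self _)
    -- `X ↦ [x]`, `Z ↦ [z]`
    let φ : P2 →ₐ[ℂ] invRing Γ ⧸ J := aeval ![Ideal.Quotient.mk J x, Ideal.Quotient.mk J z]
    have hφ0 : φ (X 0) = Ideal.Quotient.mk J x := by simp [φ]
    have hφ1 : φ (X 1) = Ideal.Quotient.mk J z := by simp [φ]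
    have hφsurj : Function.Surjective φ :=
      surjective_of_generators hΓ (x := x) (y := y) (z := z) rfl rfl rfl J φ
        ⟨X 0, hφ0⟩ ⟨X 0, hφ0.trans hmkxy⟩ ⟨X 1, hφ1⟩
    have hφI : ∀ p ∈ I, φ p = 0 := by
      have : I ≤ RingHom.ker φ := by
        rw [hI, Ideal.span_singleton_le_iff_mem, RingHom.mem_ker, map_sub, map_pow, map_pow,
          hφ0, hφ1, ← map_pow _ z, ← hxy, map_mul, ← hmkxy]
        ring
      exact fun p hp => this hp
    -- the parametrisation `u, v ↦ t`
    let ψ₀ : invRing Γ →ₐ[ℂ] Polynomial ℂ :=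
      (aeval (R := ℂ) fun _ : Fin 2 => (Polynomial.X : Polynomial ℂ)).comp (invRing Γ).val
    have hψx : ψ₀ x = Polynomial.X ^ (n + 1) := by simp [ψ₀, x]
    have hψy : ψ₀ y = Polynomial.X ^ (n + 1) := by simp [ψ₀, y]
    have hψz : ψ₀ z = Polynomial.X ^ 2 := by simp [ψ₀, z, sq]
    have hψJ : ∀ f ∈ J, ψ₀ f = 0 := by
      have : J ≤ RingHom.ker ψ₀ := by
        rw [hJ, Ideal.span_singleton_le_iff_mem, RingHom.mem_ker, map_sub, hψx, hψy, sub_self]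
      exact fun f hf => this hf
    let ψ : invRing Γ ⧸ J →ₐ[ℂ] Polynomial ℂ := Ideal.Quotient.liftₐ J ψ₀ hψJ
    have hψφ : ψ.comp φ = aeval ![(Polynomial.X : Polynomial ℂ) ^ (n + 1), Polynomial.X ^ 2] := by
      apply MvPolynomial.algHom_ext
      intro i
      fin_cases i
      · exact (congrArg ψ hφ0).trans (hψx.trans (by simp))
      · exact (congrArg ψ hφ1).trans (hψz.trans (by simp))
    have hker : ∀ p, ψ (φ p) = 0 → p ∈ I := fun p hp =>
      mem_span_cusp heven.add_one p (by rw [← hψφ]; exact hp)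
    have hψinj : Function.Injective ψ := by
      rw [injective_iff_map_eq_zero]
      intro q hq
      obtain ⟨p, rfl⟩ := hφsurj q
      exact hφI p (hker p hq)
    let Φ : P2 ⧸ I →ₐ[ℂ] invRing Γ ⧸ J := Ideal.Quotient.liftₐ I φ hφI
    have hΦ : Function.Bijective Φ := by
      constructor
      · rw [injective_iff_map_eq_zero]
        intro q hq
        obtain ⟨p, rfl⟩ := Ideal.Quotient.mk_surjective q
        have hp : φ p = 0 := hq
        exact Ideal.Quotient.eq_zero_iff_mem.2 (hker p (by rw [hp, map_zero]))
      · intro q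
        obtain ⟨p, rfl⟩ := hφsurj q
        exact ⟨Ideal.Quotient.mk I p, rfl⟩
    refine ⟨isReduced_of_injective ψ hψinj, (AlgEquiv.ofBijective Φ hΦ).symm, ?_, ?_⟩
    · rw [AlgEquiv.symm_apply_eq]; exact hφ0.symm
    · rw [AlgEquiv.symm_apply_eq]; exact hφ1.symm
  · rintro θ - ⟨hθx, hθy, hθz⟩
    have hJ : Jideal Γ θ = Ideal.span {x, z} := by
      -- `2` is invertible in the invariant ring, so `θ f = -f` puts `f` itself in `J_θ`.
      have hhalf : ∀ f : invRing Γ, θ f = -f → f ∈ Jideal Γ θ := by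
        intro f hf
        have h1 : θ f - f ∈ Jideal Γ θ := Ideal.subset_span ⟨f, rfl⟩
        have h2 := (Jideal Γ θ).mul_mem_left (algebraMap ℂ _ (-1 / 2)) h1
        rw [hf, ← Algebra.smul_def] at h2
        convert h2 using 1
        module
      apply le_antisymm
      · have hxmem : x ∈ Ideal.span {x, z} := Ideal.subset_span (by simp)
        have hzmem : z ∈ Ideal.span {x, z} := Ideal.subset_span (by simp)
        apply Jideal_le hΓ (x := x) (y := y) (z := z) rfl rfl rfl
        · rw [hθx]; exact sub_mem (neg_mem hxmem) hxmem
        · rw [hθy, sub_self]; exact zero_mem _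
        · rw [hθz]; exact sub_mem (neg_mem hzmem) hzmem
      · rw [Ideal.span_le]
        rintro f (rfl | rfl)
        · exact hhalf _ hθx
        · exact hhalf _ hθz
    refine ⟨hJ, ?_⟩
    generalize Jideal Γ θ = J at hJ ⊢
    have hmkx : Ideal.Quotient.mk J x = 0 :=
      Ideal.Quotient.eq_zero_iff_mem.2 (hJ ▸ Ideal.subset_span (by simp))
    have hmkz : Ideal.Quotient.mk J z = 0 :=
      Ideal.Quotient.eq_zero_iff_mem.2 (hJ ▸ Ideal.subset_span (by simp))
    -- `Y ↦ [y]`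
    let φ : Polynomial ℂ →ₐ[ℂ] invRing Γ ⧸ J := Polynomial.aeval (Ideal.Quotient.mk J y)
    have hφX : φ Polynomial.X = Ideal.Quotient.mk J y := by simp [φ]
    have hφsurj : Function.Surjective φ :=
      surjective_of_generators hΓ (x := x) (y := y) (z := z) rfl rfl rfl J φ
        (hmkx ▸ zero_mem _) ⟨_, hφX⟩ (hmkz ▸ zero_mem _)
    -- the parametrisation `u ↦ 0`, `v ↦ t`
    let ψ₀ : invRing Γ →ₐ[ℂ] Polynomial ℂ :=
      (aeval (R := ℂ) ![0, (Polynomial.X : Polynomial ℂ)]).comp (invRing Γ).val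
    have hψx : ψ₀ x = 0 := by simp [ψ₀, x]
    have hψy : ψ₀ y = Polynomial.X ^ (n + 1) := by simp [ψ₀, y]
    have hψz : ψ₀ z = 0 := by simp [ψ₀, z]
    have hψJ : ∀ f ∈ J, ψ₀ f = 0 := by
      have : J ≤ RingHom.ker ψ₀ := by
        rw [hJ, Ideal.span_le]
        rintro f (rfl | rfl)
        · exact hψx
        · exact hψz
      exact fun f hf => this hf
    let ψ : invRing Γ ⧸ J →ₐ[ℂ] Polynomial ℂ := Ideal.Quotient.liftₐ J ψ₀ hψJ
    have hψφ : ψ.comp φ = Polynomial.expand ℂ (n + 1) := by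
      apply Polynomial.algHom_ext
      rw [Polynomial.expand_X]
      exact (congrArg ψ hφX).trans hψy
    have hφ : Function.Bijective φ := by
      refine ⟨Function.Injective.of_comp (f := ψ) ?_, hφsurj⟩
      rw [← AlgHom.coe_comp, hψφ]
      exact Polynomial.expand_injective n.succ_pos
    let e := (AlgEquiv.ofBijective φ hφ).symm
    refine ⟨isReduced_of_injective e e.injective, e, ?_⟩
    rw [AlgEquiv.symm_apply_eq]; exact hφX.symm
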